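/- arXiv:2509.11751 — 2 statements merged into one kernel-verified Lean document; each statement's English description precedes it below -/
import Mathlib

section
/- Let n ≥ 2, p ≥ 0, g > 0, and let X ∈ ℝ^{n×p} satisfy Xᵀι = 0 (centered columns, ι the vector of ones) and have the property that (ι : X) ∈ ℝ^{n×(p+1)} has full column rank. Set A = (1 + 1/g) XᵀX and P = I_n − n^{-1} ιιᵀ − X A^{-1} Xᵀ. Then for every z ∈ ℝ^n with zᵀPz > 0, ∫_0^∞ ∫_{ℝ^p} ∫_ℝ N_n(z; αι + Xβ, σ² I_n) · N_p(β; 0, g σ² (XᵀX)^{-1}) · σ^{-2} dα dβ d(σ²) = ( Γ((n−1)/2) / ( π^{(n−1)/2} √n ) ) · g^{-p/2} · |XᵀX|^{1/2} · |A|^{-1/2} · ( zᵀPz )^{-(n−1)/2}; in particular this integral is finite. (For p = 0 the β-integral and the factors g^{-p/2} |XᵀX|^{1/2} |A|^{-1/2} and X A^{-1} Xᵀ are absent.) -/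
/-!
Given `σ²`, write `C = I - n⁻¹ ιιᵀ`. The intercept is a one-dimensional Gaussian variable around the
mean of `z - Xβ`, and integrating it out leaves `exp (-(z - Xβ)ᵀ C (z - Xβ) / (2σ²))`. The sum of
this quadratic form and that of a normal prior `N(0, σ² Λ⁻¹)` is a positive definite form in `β`
around the ridge estimator plus a form in `z` alone, so the `β`-integral only contributes
determinants and the powers of `σ²` from the prior cancel. What remains is an inverse-gamma integral
in `σ²`. The g-prior is the case `Λ = g⁻¹ XᵀX`, and for centered columns `C X = X`.
-/

open MeasureTheory Matrix Real

/-- pdf of the `k`-variate Gaussian with mean `m` and covariance `S`. -/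
noncomputable def gaussPdf {k : ℕ} (m : Fin k → ℝ) (S : Matrix (Fin k) (Fin k) ℝ)
    (x : Fin k → ℝ) : ℝ :=
  (2 * Real.pi) ^ (-(k : ℝ) / 2) * S.det ^ (-(1 : ℝ) / 2) *
    Real.exp (-(1 / 2) * ((x - m) ⬝ᵥ (S⁻¹ *ᵥ (x - m))))

section GaussianIntegral

variable {ι : Type*} [Fintype ι]

theorem integral_exp_neg_mul_dotProduct_self (c : ℝ) :
    ∫ y : ι → ℝ, exp (-c * (y ⬝ᵥ y)) = √(π / c) ^ Fintype.card ι := by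
  rw [← integral_gaussian c, ← integral_fintype_prod_volume_eq_pow]
  simp only [← exp_sum, ← Finset.mul_sum, dotProduct, sq]

variable [DecidableEq ι]

theorem exists_isUnit_eq_transpose_mul_self {A : Matrix ι ι ℝ} (hA : A.PosDef) :
    ∃ B : Matrix ι ι ℝ, IsUnit B ∧ A = Bᵀ * B := by
  open scoped MatrixOrder Matrix.Norms.L2Operator in
  exact CStarAlgebra.isStrictlyPositive_iff_eq_star_mul_self.mp hA.isStrictlyPositive

theorem integral_comp_mulVec {E : Type*} [NormedAddCommGroup E] [NormedSpace ℝ E]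
    {B : Matrix ι ι ℝ} (hB : IsUnit B) (f : (ι → ℝ) → E) :
    ∫ x, f (B *ᵥ x) = |B.det|⁻¹ • ∫ y, f y := by
  have hdet : B.det ≠ 0 := ((isUnit_iff_isUnit_det B).mp hB).ne_zero
  have hcont : Continuous (toLin' B) := LinearMap.continuous_of_finiteDimensional _
  have hemb : MeasurableEmbedding (toLin' B) :=
    hcont.measurableEmbedding (mulVec_injective_iff_isUnit.mpr hB)
  rw [← abs_inv, ← ENNReal.toReal_ofReal (abs_nonneg B.det⁻¹), ← integral_smul_measure,
    ← Real.map_matrix_volume_pi_eq_smul_volume_pi hdet, hemb.integral_map]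
  rfl

theorem integral_exp_neg_mul_dotProduct_mulVec {A : Matrix ι ι ℝ} (hA : A.PosDef) (c : ℝ) :
    ∫ x : ι → ℝ, exp (-c * (x ⬝ᵥ (A *ᵥ x))) =
      √(π / c) ^ Fintype.card ι * A.det ^ (-(1 : ℝ) / 2) := by
  obtain ⟨B, hB, rfl⟩ := exists_isUnit_eq_transpose_mul_self hA
  have hquad (x : ι → ℝ) : x ⬝ᵥ ((Bᵀ * B) *ᵥ x) = (B *ᵥ x) ⬝ᵥ (B *ᵥ x) := by
    rw [← mulVec_mulVec, dotProduct_mulVec, vecMul_transpose]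
  have hdet : (Bᵀ * B).det ^ (-(1 : ℝ) / 2) = |B.det|⁻¹ := by
    rw [det_mul, det_transpose, neg_div, rpow_neg (mul_self_nonneg _), ← sqrt_eq_rpow,
      sqrt_mul_self_eq_abs]
  simp only [hquad]
  rw [integral_comp_mulVec hB (fun y ↦ exp (-c * (y ⬝ᵥ y))),
    integral_exp_neg_mul_dotProduct_self, hdet, smul_eq_mul, mul_comm]

end GaussianIntegral

section InverseGamma

theorem integral_rpow_neg_sub_one_mul_exp_neg_div {a q : ℝ} (ha : 0 < a) (hq : 0 < q) :
    ∫ s in Set.Ioi (0 : ℝ), s ^ (-a - 1) * exp (-(q / s)) = q ^ (-a) * Gamma a := by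
  have hsubst := integral_comp_rpow_Ioi (fun t : ℝ ↦ t ^ (a - 1) * exp (-(q * t))) (p := -1)
    (by norm_num)
  rw [integral_rpow_mul_exp_neg_mul_Ioi ha hq] at hsubst
  rw [rpow_neg hq.le, ← inv_rpow hq.le, ← one_div, ← hsubst]
  refine setIntegral_congr_fun measurableSet_Ioi fun s (hs : 0 < s) ↦ ?_
  simp only [smul_eq_mul, abs_neg, abs_one, one_mul]
  rw [← rpow_mul hs.le, ← mul_assoc, ← rpow_add hs, rpow_neg_one, div_eq_mul_inv]
  congr 2
  ring

theorem integral_jeffreys_scale {a q : ℝ} (ha : 0 < a) (hq : 0 < q) :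
    ∫ s in Set.Ioi (0 : ℝ), (2 * π * s) ^ (-a) * exp (-(2 * s)⁻¹ * q) * s⁻¹ =
      Gamma a / π ^ a * q ^ (-a) := by
  have hintegrand : ∀ s ∈ Set.Ioi (0 : ℝ), (2 * π * s) ^ (-a) * exp (-(2 * s)⁻¹ * q) * s⁻¹ =
      (2 * π) ^ (-a) * (s ^ (-a - 1) * exp (-(q / 2 / s))) := fun s (hs : 0 < s) ↦ by
    rw [mul_rpow two_pi_pos.le hs.le, rpow_sub_one hs.ne',
      show -(2 * s)⁻¹ * q = -(q / 2 / s) by field_simp]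
    ring
  rw [setIntegral_congr_fun measurableSet_Ioi hintegrand, integral_const_mul,
    integral_rpow_neg_sub_one_mul_exp_neg_div ha (half_pos hq), ← mul_assoc,
    ← mul_rpow two_pi_pos.le (half_pos hq).le, show 2 * π * (q / 2) = π * q by ring,
    mul_rpow pi_pos.le hq.le, rpow_neg pi_pos.le]
  ring

end InverseGamma

section Ridge

variable {m k R : Type*} [Fintype m] [CommRing R]

/-- The precision matrix `A = Xᵀ S X + Λ` of the coefficients in the regression on `X` with error
precision `S` and prior precision `Λ`. -/
def posteriorPrecision (S : Matrix m m R) (X : Matrix m k R) (Λ : Matrix k k R) : Matrix k k R :=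
  Xᵀ * S * X + Λ

theorem posDef_posteriorPrecision [Finite k] {S : Matrix m m ℝ} (hS : S.PosSemidef)
    (X : Matrix m k ℝ) {Λ : Matrix k k ℝ} (hΛ : Λ.PosDef) : (posteriorPrecision S X Λ).PosDef :=
  hΛ.posSemidef_add (hS.conjTranspose_mul_mul_same X)

variable [Fintype k] [DecidableEq k]

/-- The precision matrix of the response in the regression on `X` with error precision `S`, after
integrating out coefficients of prior precision `Λ`. It is defined by the Woodbury form of
`(S⁻¹ + X Λ⁻¹ Xᵀ)⁻¹`, which does not ask `S` to be invertible. -/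
noncomputable def marginalPrecision (S : Matrix m m R) (X : Matrix m k R) (Λ : Matrix k k R) :
    Matrix m m R :=
  S - S * X * (posteriorPrecision S X Λ)⁻¹ * Xᵀ * S

theorem dotProduct_mulVec_sub_inv_mulVec {A : Matrix k k R} (hA : A.IsSymm) (hu : IsUnit A.det)
    (x c : k → R) :
    (x - A⁻¹ *ᵥ c) ⬝ᵥ (A *ᵥ (x - A⁻¹ *ᵥ c)) =
      x ⬝ᵥ (A *ᵥ x) - 2 * (c ⬝ᵥ x) + c ⬝ᵥ (A⁻¹ *ᵥ c) := by
  have hAb : A *ᵥ (A⁻¹ *ᵥ c) = c := by rw [mulVec_mulVec, mul_nonsing_inv A hu, one_mulVec]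
  have hbA : (A⁻¹ *ᵥ c) ⬝ᵥ (A *ᵥ x) = c ⬝ᵥ x := by
    rw [dotProduct_mulVec, ← mulVec_transpose, hA.eq, hAb]
  rw [mulVec_sub, hAb, sub_dotProduct, dotProduct_sub, dotProduct_sub, hbA, dotProduct_comm x c,
    dotProduct_comm (A⁻¹ *ᵥ c) c]
  ring

theorem weighted_residual_add_penalty {S : Matrix m m R} (hS : S.IsSymm) (X : Matrix m k R)
    {Λ : Matrix k k R} (hΛ : Λ.IsSymm) (hu : IsUnit (posteriorPrecision S X Λ).det)
    (z : m → R) (β : k → R) :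
    (z - X *ᵥ β) ⬝ᵥ (S *ᵥ (z - X *ᵥ β)) + β ⬝ᵥ (Λ *ᵥ β) =
      (β - (posteriorPrecision S X Λ)⁻¹ *ᵥ ((Xᵀ * S) *ᵥ z)) ⬝ᵥ (posteriorPrecision S X Λ *ᵥ
        (β - (posteriorPrecision S X Λ)⁻¹ *ᵥ ((Xᵀ * S) *ᵥ z))) +
      z ⬝ᵥ (marginalPrecision S X Λ *ᵥ z) := by
  have hsymm : (posteriorPrecision S X Λ).IsSymm := by
    simp only [IsSymm, posteriorPrecision, transpose_add, transpose_mul, transpose_transpose,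
      hS.eq, hΛ.eq, Matrix.mul_assoc]
  have hXS : (Xᵀ * S) *ᵥ z = z ᵥ* (S * X) := by
    rw [← mulVec_transpose, transpose_mul, hS.eq]
  have hcross : z ⬝ᵥ (S *ᵥ (X *ᵥ β)) = ((Xᵀ * S) *ᵥ z) ⬝ᵥ β := by
    rw [mulVec_mulVec, dotProduct_mulVec, hXS]
  have hcross' : (X *ᵥ β) ⬝ᵥ (S *ᵥ z) = ((Xᵀ * S) *ᵥ z) ⬝ᵥ β := by
    rw [dotProduct_comm, ← mulVec_mulVec, mulVec_transpose, dotProduct_mulVec]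
  have hpost : β ⬝ᵥ (posteriorPrecision S X Λ *ᵥ β) =
      (X *ᵥ β) ⬝ᵥ (S *ᵥ (X *ᵥ β)) + β ⬝ᵥ (Λ *ᵥ β) := by
    rw [posteriorPrecision, add_mulVec, dotProduct_add, ← mulVec_mulVec, ← mulVec_mulVec,
      dotProduct_mulVec β, vecMul_transpose]
  have hmarg : z ⬝ᵥ (marginalPrecision S X Λ *ᵥ z) = z ⬝ᵥ (S *ᵥ z) -
      ((Xᵀ * S) *ᵥ z) ⬝ᵥ ((posteriorPrecision S X Λ)⁻¹ *ᵥ ((Xᵀ * S) *ᵥ z)) := by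
    rw [marginalPrecision, sub_mulVec, dotProduct_sub, Matrix.mul_assoc _ Xᵀ S,
      ← mulVec_mulVec z _ (Xᵀ * S), dotProduct_mulVec z (S * X * _), ← vecMul_vecMul, ← hXS,
      ← dotProduct_mulVec]
  rw [dotProduct_mulVec_sub_inv_mulVec hsymm hu, hmarg, hpost, mulVec_sub, sub_dotProduct,
    dotProduct_sub, dotProduct_sub, hcross, hcross']
  ring

end Ridge

section Centering

variable {ι : Type*} [Fintype ι] [DecidableEq ι]

variable (ι) in
/-- The matrix `I - n⁻¹ ιιᵀ` of the orthogonal projection that subtracts from a vector its mean. -/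
noncomputable def centeringMatrix : Matrix ι ι ℝ :=
  1 - (Fintype.card ι : ℝ)⁻¹ • of fun _ _ ↦ 1

theorem isSymm_centeringMatrix : (centeringMatrix ι).IsSymm :=
  isSymm_one.sub (IsSymm.smul (.ext fun _ _ ↦ rfl) _)

theorem dotProduct_centeringMatrix_mulVec (v : ι → ℝ) :
    v ⬝ᵥ (centeringMatrix ι *ᵥ v) = v ⬝ᵥ v - (Fintype.card ι : ℝ)⁻¹ * (∑ i, v i) ^ 2 := by
  have hones : v ⬝ᵥ ((of fun _ _ : ι ↦ (1 : ℝ)) *ᵥ v) = (∑ i, v i) ^ 2 := by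
    simp [dotProduct, mulVec, ← Finset.sum_mul, sq]
  rw [centeringMatrix, sub_mulVec, one_mulVec, smul_mulVec, dotProduct_sub, dotProduct_smul, hones,
    smul_eq_mul]

theorem dotProduct_self_sub_const [Nonempty ι] (v : ι → ℝ) (a : ℝ) :
    (v - fun _ ↦ a) ⬝ᵥ (v - fun _ ↦ a) =
      Fintype.card ι * (a - (Fintype.card ι : ℝ)⁻¹ * ∑ i, v i) ^ 2 +
        v ⬝ᵥ (centeringMatrix ι *ᵥ v) := by
  have hexpand : (v - fun _ ↦ a) ⬝ᵥ (v - fun _ ↦ a) =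
      v ⬝ᵥ v - 2 * a * ∑ i, v i + Fintype.card ι * a ^ 2 := by
    simp only [sub_dotProduct, dotProduct_sub]
    simp only [dotProduct, ← Finset.mul_sum, ← Finset.sum_mul, Finset.sum_const, Finset.card_univ,
      nsmul_eq_mul]
    ring
  rw [hexpand, dotProduct_centeringMatrix_mulVec]
  field_simp
  ring

theorem posSemidef_centeringMatrix [Nonempty ι] : (centeringMatrix ι).PosSemidef := by
  refine .of_dotProduct_mulVec_nonneg isSymm_centeringMatrix fun v ↦ ?_
  have hmean := dotProduct_self_sub_const v ((Fintype.card ι : ℝ)⁻¹ * ∑ i, v i)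
  rw [sub_self, zero_pow two_ne_zero, mul_zero, zero_add] at hmean
  exact (dotProduct_self_star_nonneg _).trans_eq hmean

theorem centeringMatrix_mul_eq_self {κ : Type*} {X : Matrix ι κ ℝ}
    (hX : Xᵀ *ᵥ (fun _ ↦ 1) = 0) : centeringMatrix ι * X = X := by
  have hones : (of fun _ _ : ι ↦ (1 : ℝ)) * X = 0 := by
    ext i j
    simpa [mul_apply, mulVec, dotProduct] using congrFun hX j
  rw [centeringMatrix, Matrix.sub_mul, Matrix.one_mul, smul_mul, hones, smul_zero, sub_zero]

theorem transpose_mul_centeringMatrix_eq_self {κ : Type*} {X : Matrix ι κ ℝ}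
    (hX : Xᵀ *ᵥ (fun _ ↦ 1) = 0) : Xᵀ * centeringMatrix ι = Xᵀ := by
  rw [← isSymm_centeringMatrix.eq, ← transpose_mul, centeringMatrix_mul_eq_self hX]

end Centering

section GaussPdf

theorem inv_smul_of_ne_zero {κ K : Type*} [Fintype κ] [DecidableEq κ] [Field K] {c : K}
    (hc : c ≠ 0) {A : Matrix κ κ K} (hA : IsUnit A.det) : (c • A)⁻¹ = c⁻¹ • A⁻¹ :=
  Matrix.inv_smul' A (Units.mk0 c hc) hA

theorem gaussPdf_smul_inv {k : ℕ} {Λ : Matrix (Fin k) (Fin k) ℝ} (hΛ : Λ.PosDef) {s : ℝ}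
    (hs : 0 < s) (m x : Fin k → ℝ) :
    gaussPdf m (s • Λ⁻¹) x = (2 * π * s) ^ (-(k : ℝ) / 2) * Λ.det ^ ((1 : ℝ) / 2) *
      exp (-(2 * s)⁻¹ * ((x - m) ⬝ᵥ (Λ *ᵥ (x - m)))) := by
  have hunit : IsUnit Λ.det := hΛ.det_pos.ne'.isUnit
  have hinv : (s • Λ⁻¹)⁻¹ = s⁻¹ • Λ := by
    rw [inv_smul_of_ne_zero hs.ne' (isUnit_nonsing_inv_det Λ hunit),
      nonsing_inv_nonsing_inv Λ hunit]
  have hdet : (s • Λ⁻¹).det ^ (-(1 : ℝ) / 2) = s ^ (-(k : ℝ) / 2) * Λ.det ^ ((1 : ℝ) / 2) := by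
    rw [det_smul, Fintype.card_fin, det_nonsing_inv, Ring.inverse_eq_inv',
      mul_rpow (by positivity) (inv_nonneg.mpr hΛ.det_pos.le), ← rpow_natCast, ← rpow_mul hs.le,
      inv_rpow hΛ.det_pos.le, ← rpow_neg hΛ.det_pos.le]
    ring_nf
  rw [gaussPdf, hinv, hdet, smul_mulVec, dotProduct_smul, mul_rpow two_pi_pos.le hs.le,
    smul_eq_mul, mul_inv]
  ring_nf

theorem integral_gaussPdf_intercept {n : ℕ} [NeZero n] {s : ℝ} (hs : 0 < s) (w z : Fin n → ℝ) :
    ∫ α : ℝ, gaussPdf (fun i ↦ α + w i) (s • 1) z =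
      (2 * π * s) ^ (-(((n : ℝ) - 1) / 2)) / √n *
        exp (-(2 * s)⁻¹ * ((z - w) ⬝ᵥ (centeringMatrix (Fin n) *ᵥ (z - w)))) := by
  have hpdf (α : ℝ) : gaussPdf (fun i ↦ α + w i) (s • 1) z =
      (2 * π * s) ^ (-(n : ℝ) / 2) *
        (exp (-((2 * s)⁻¹ * n) * (α - (n : ℝ)⁻¹ * ∑ i, (z - w) i) ^ 2) *
          exp (-(2 * s)⁻¹ * ((z - w) ⬝ᵥ (centeringMatrix (Fin n) *ᵥ (z - w))))) := by
    have hres : (z - fun i ↦ α + w i) = (z - w) - fun _ ↦ α := by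
      ext i
      simp only [Pi.sub_apply]
      ring
    rw [← inv_one, gaussPdf_smul_inv .one hs, hres, one_mulVec, dotProduct_self_sub_const,
      det_one, one_rpow, mul_one, Fintype.card_fin, ← exp_add]
    ring_nf
  have hsqrt : √(π / ((2 * s)⁻¹ * n)) = (2 * π * s) ^ ((1 : ℝ) / 2) / √n := by
    rw [← sqrt_eq_rpow, ← sqrt_div (by positivity)]
    congr 1
    field_simp
  have hpow : (2 * π * s) ^ (-(((n : ℝ) - 1) / 2)) =
      (2 * π * s) ^ (-(n : ℝ) / 2) * (2 * π * s) ^ ((1 : ℝ) / 2) := by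
    rw [← rpow_add (by positivity)]
    ring_nf
  simp only [hpdf]
  rw [integral_const_mul, integral_mul_const,
    integral_sub_right_eq_self (fun α : ℝ ↦ exp (-((2 * s)⁻¹ * n) * α ^ 2)), integral_gaussian,
    hsqrt, hpow]
  ring

theorem integral_exp_neg_mul_gaussPdf {m : Type*} [Fintype m] {p : ℕ} {S : Matrix m m ℝ}
    (hS : S.PosSemidef) (X : Matrix m (Fin p) ℝ) {Λ : Matrix (Fin p) (Fin p) ℝ} (hΛ : Λ.PosDef)
    {s : ℝ} (hs : 0 < s) (z : m → ℝ) :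
    ∫ β : Fin p → ℝ, exp (-(2 * s)⁻¹ * ((z - X *ᵥ β) ⬝ᵥ (S *ᵥ (z - X *ᵥ β)))) *
        gaussPdf 0 (s • Λ⁻¹) β =
      Λ.det ^ ((1 : ℝ) / 2) * (posteriorPrecision S X Λ).det ^ (-(1 : ℝ) / 2) *
        exp (-(2 * s)⁻¹ * (z ⬝ᵥ (marginalPrecision S X Λ *ᵥ z))) := by
  have hA := posDef_posteriorPrecision hS X hΛ
  set A := posteriorPrecision S X Λ
  set b := A⁻¹ *ᵥ ((Xᵀ * S) *ᵥ z)
  have hsplit (β : Fin p → ℝ) :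
      exp (-(2 * s)⁻¹ * ((z - X *ᵥ β) ⬝ᵥ (S *ᵥ (z - X *ᵥ β)))) * gaussPdf 0 (s • Λ⁻¹) β =
        (2 * π * s) ^ (-(p : ℝ) / 2) * Λ.det ^ ((1 : ℝ) / 2) *
          (exp (-(2 * s)⁻¹ * ((β - b) ⬝ᵥ (A *ᵥ (β - b)))) *
            exp (-(2 * s)⁻¹ * (z ⬝ᵥ (marginalPrecision S X Λ *ᵥ z)))) := by
    rw [gaussPdf_smul_inv hΛ hs, sub_zero, mul_left_comm, ← exp_add, ← exp_add, ← mul_add,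
      ← mul_add, weighted_residual_add_penalty (isHermitian_iff_isSymm.mp hS.isHermitian) X
        (isHermitian_iff_isSymm.mp hΛ.isHermitian) hA.det_pos.ne'.isUnit]
  have hpow : √(π / (2 * s)⁻¹) ^ p = ((2 * π * s) ^ (-(p : ℝ) / 2))⁻¹ := by
    rw [div_inv_eq_mul, ← rpow_neg (by positivity), sqrt_eq_rpow, ← rpow_natCast,
      ← rpow_mul (by positivity)]
    ring_nf
  simp only [hsplit]
  rw [integral_const_mul, integral_mul_const,
    integral_sub_right_eq_self (fun β : Fin p → ℝ ↦ exp (-(2 * s)⁻¹ * (β ⬝ᵥ (A *ᵥ β)))) b,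
    integral_exp_neg_mul_dotProduct_mulVec hA, Fintype.card_fin, hpow]
  field_simp

theorem integral_gaussPdf_intercept_coefficients {n p : ℕ} [NeZero n]
    (X : Matrix (Fin n) (Fin p) ℝ) {Λ : Matrix (Fin p) (Fin p) ℝ} (hΛ : Λ.PosDef) {s : ℝ}
    (hs : 0 < s) (z : Fin n → ℝ) :
    ∫ β : Fin p → ℝ, ∫ α : ℝ,
        gaussPdf (fun i ↦ α + (X *ᵥ β) i) (s • 1) z * gaussPdf 0 (s • Λ⁻¹) β =
      Λ.det ^ ((1 : ℝ) / 2) *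
        (posteriorPrecision (centeringMatrix (Fin n)) X Λ).det ^ (-(1 : ℝ) / 2) / √n *
        ((2 * π * s) ^ (-(((n : ℝ) - 1) / 2)) *
          exp (-(2 * s)⁻¹ * (z ⬝ᵥ (marginalPrecision (centeringMatrix (Fin n)) X Λ *ᵥ z)))) := by
  simp only [integral_mul_const, integral_gaussPdf_intercept hs, mul_assoc _ (exp _)]
  rw [integral_const_mul, integral_exp_neg_mul_gaussPdf posSemidef_centeringMatrix X hΛ hs]
  ring

end GaussPdf

theorem latent_gaussian_marginal_closed_form_general {n p : ℕ} (hn : 2 ≤ n)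
    (X : Matrix (Fin n) (Fin p) ℝ) {Λ : Matrix (Fin p) (Fin p) ℝ} (hΛ : Λ.PosDef) (z : Fin n → ℝ)
    (hz : 0 < z ⬝ᵥ (marginalPrecision (centeringMatrix (Fin n)) X Λ *ᵥ z)) :
    (∫ s in Set.Ioi (0 : ℝ), ∫ β : Fin p → ℝ, ∫ α : ℝ,
        gaussPdf (fun i ↦ α + (X *ᵥ β) i) (s • 1) z * gaussPdf 0 (s • Λ⁻¹) β * s⁻¹) =
      Gamma (((n : ℝ) - 1) / 2) / (π ^ (((n : ℝ) - 1) / 2) * √n) *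
        Λ.det ^ ((1 : ℝ) / 2) *
        (posteriorPrecision (centeringMatrix (Fin n)) X Λ).det ^ (-(1 : ℝ) / 2) *
        (z ⬝ᵥ (marginalPrecision (centeringMatrix (Fin n)) X Λ *ᵥ z)) ^ (-((n : ℝ) - 1) / 2) := by
  have : NeZero n := ⟨by omega⟩
  have ha : 0 < ((n : ℝ) - 1) / 2 := by
    have : (2 : ℝ) ≤ n := by exact_mod_cast hn
    linarith
  set C := centeringMatrix (Fin n)
  have hinner : ∀ s ∈ Set.Ioi (0 : ℝ), (∫ β : Fin p → ℝ, ∫ α : ℝ,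
      gaussPdf (fun i ↦ α + (X *ᵥ β) i) (s • 1) z * gaussPdf 0 (s • Λ⁻¹) β * s⁻¹) =
        Λ.det ^ ((1 : ℝ) / 2) * (posteriorPrecision C X Λ).det ^ (-(1 : ℝ) / 2) / √n *
          ((2 * π * s) ^ (-(((n : ℝ) - 1) / 2)) *
            exp (-(2 * s)⁻¹ * (z ⬝ᵥ (marginalPrecision C X Λ *ᵥ z))) * s⁻¹) := fun s hs ↦ by
    simp only [integral_mul_const s⁻¹]
    rw [integral_gaussPdf_intercept_coefficients X hΛ hs, mul_assoc]
  rw [setIntegral_congr_fun measurableSet_Ioi hinner, integral_const_mul,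
    integral_jeffreys_scale ha hz, neg_div 2 ((n : ℝ) - 1)]
  ring

section GPrior

theorem linearIndependent_col_of_rank_eq_card {K m k : Type*} [Field K] [Fintype k]
    {M : Matrix m k K} (hM : M.rank = Fintype.card k) : LinearIndependent K M.col := by
  rw [linearIndependent_iff_card_eq_finrank_span, ← hM, rank_eq_finrank_span_cols]
  rfl

theorem posDef_transpose_mul_self_of_rank_cons_one {m : Type*} [Fintype m] {p : ℕ}
    {X : Matrix m (Fin p) ℝ}
    (hrank : (of fun i ↦ Fin.cons 1 (X i) : Matrix m (Fin (p + 1)) ℝ).rank = p + 1) :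
    (Xᵀ * X).PosDef := by
  have hcol : LinearIndependent ℝ X.col :=
    (linearIndependent_col_of_rank_eq_card (hrank.trans (Fintype.card_fin _).symm)).comp Fin.succ
      (Fin.succ_injective p)
  exact .conjTranspose_mul_self X (mulVec_injective_iff.mpr hcol)

theorem posteriorPrecision_centeringMatrix_gPrior {ι κ : Type*} [Fintype ι] [DecidableEq ι]
    {X : Matrix ι κ ℝ} (hX : Xᵀ *ᵥ (fun _ ↦ 1) = 0) (g : ℝ) :
    posteriorPrecision (centeringMatrix ι) X (g⁻¹ • (Xᵀ * X)) = (1 + 1 / g) • (Xᵀ * X) := by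
  rw [posteriorPrecision, transpose_mul_centeringMatrix_eq_self hX, add_smul, one_smul, one_div]

theorem marginalPrecision_centeringMatrix_gPrior {ι κ : Type*} [Fintype ι] [DecidableEq ι]
    [Fintype κ] [DecidableEq κ] {X : Matrix ι κ ℝ} (hX : Xᵀ *ᵥ (fun _ ↦ 1) = 0) (g : ℝ) :
    marginalPrecision (centeringMatrix ι) X (g⁻¹ • (Xᵀ * X)) =
      centeringMatrix ι - X * ((1 + 1 / g) • (Xᵀ * X))⁻¹ * Xᵀ := by
  rw [marginalPrecision, posteriorPrecision_centeringMatrix_gPrior hX,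
    centeringMatrix_mul_eq_self hX, Matrix.mul_assoc _ Xᵀ, transpose_mul_centeringMatrix_eq_self hX]

theorem det_inv_smul_rpow_half {p : ℕ} {G : Matrix (Fin p) (Fin p) ℝ} (hG : 0 ≤ G.det) {g : ℝ}
    (hg : 0 ≤ g) :
    (g⁻¹ • G).det ^ ((1 : ℝ) / 2) = g ^ (-(p : ℝ) / 2) * G.det ^ ((1 : ℝ) / 2) := by
  rw [det_smul, Fintype.card_fin, mul_rpow (by positivity) hG, inv_pow, ← rpow_natCast,
    ← rpow_neg hg, ← rpow_mul hg]
  ring_nf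

theorem smul_inv_inv_smul {κ : Type*} [Fintype κ] [DecidableEq κ] {G : Matrix κ κ ℝ}
    (hG : IsUnit G.det) {g : ℝ} (hg : g ≠ 0) (s : ℝ) : s • (g⁻¹ • G)⁻¹ = (g * s) • G⁻¹ := by
  rw [inv_smul_of_ne_zero (inv_ne_zero hg) hG, inv_inv, smul_smul, mul_comm]

end GPrior

/-- Closed-form marginal density of the latent Gaussian regression after
integrating out the intercept `α` (flat prior), coefficients `β` (g-prior) and
variance `σ²` (Jeffreys prior `σ⁻²`). -/
theorem latent_gaussian_marginal_closed_form (n p : ℕ) (hn : 2 ≤ n)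
    (g : ℝ) (hg : 0 < g) (X : Matrix (Fin n) (Fin p) ℝ)
    (hcent : Xᵀ *ᵥ (fun _ => (1 : ℝ)) = 0)
    (hrank : (Matrix.of fun i => Fin.cons (1 : ℝ) (fun j => X i j)
        : Matrix (Fin n) (Fin (p + 1)) ℝ).rank = p + 1)
    (A : Matrix (Fin p) (Fin p) ℝ) (hA : A = (1 + 1 / g) • (Xᵀ * X))
    (P : Matrix (Fin n) (Fin n) ℝ)
    (hP : P = 1 - (n : ℝ)⁻¹ • (Matrix.of fun _ _ => (1 : ℝ)) - X * A⁻¹ * Xᵀ)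
    (z : Fin n → ℝ) (hz : 0 < z ⬝ᵥ (P *ᵥ z)) :
    (∫ s in Set.Ioi (0 : ℝ), ∫ β : Fin p → ℝ, ∫ α : ℝ,
        gaussPdf (fun i => α + (X *ᵥ β) i) (s • (1 : Matrix (Fin n) (Fin n) ℝ)) z *
          gaussPdf (0 : Fin p → ℝ) ((g * s) • (Xᵀ * X)⁻¹) β * s⁻¹) =
      Real.Gamma (((n : ℝ) - 1) / 2) /
          (Real.pi ^ (((n : ℝ) - 1) / 2) * Real.sqrt n) *
        g ^ (-(p : ℝ) / 2) * (Xᵀ * X).det ^ ((1 : ℝ) / 2) *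
        A.det ^ (-(1 : ℝ) / 2) * (z ⬝ᵥ (P *ᵥ z)) ^ (-((n : ℝ) - 1) / 2) := by
  have hG := posDef_transpose_mul_self_of_rank_cons_one hrank
  have hP' : marginalPrecision (centeringMatrix (Fin n)) X (g⁻¹ • (Xᵀ * X)) = P := by
    rw [marginalPrecision_centeringMatrix_gPrior hcent, ← hA, hP, centeringMatrix, Fintype.card_fin]
  have hmarginal := latent_gaussian_marginal_closed_form_general hn X (hG.smul (inv_pos.mpr hg)) z
    (hP' ▸ hz)
  simp only [smul_inv_inv_smul hG.det_pos.ne'.isUnit hg.ne'] at hmarginal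
  rw [hmarginal, hP', posteriorPrecision_centeringMatrix_gPrior hcent, ← hA,
    det_inv_smul_rpow_half hG.det_pos.le hg.le, mul_assoc _ (g ^ _)]
end

section
/- Let y ∈ ℕ₀^n and for each i define the interval I_i = (−∞, 0) if y_i = 0 and I_i = [log y_i, log(y_i + 1)) if y_i ≥ 1. Let X ∈ ℝ^{n×p} with rows x_iᵀ be such that Xᵀι = 0 and (ι : X) has full column rank, and let g > 0. Assume there exist indices i ≠ j with 0 < y_i < y_j (two distinct positive counts). Then the STAR marginal likelihood is finite: ∫_0^∞ ∫_{ℝ^p} ∫_ℝ ∫_{I_1 × ⋯ × I_n} ∏_{i=1}^n (2πσ²)^{−1/2} exp( −(z_i − α − x_iᵀβ)²/(2σ²) ) · N_p(β; 0, g σ² (XᵀX)^{-1}) · σ^{-2} dz dα dβ d(σ²) < ∞. -/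
open MeasureTheory Matrix Real

/-- univariate Gaussian density with variance `s` evaluated at `t`. -/
noncomputable def nd (s t : ℝ) : ℝ :=
  (2 * Real.pi * s) ^ (-(1 : ℝ) / 2) * Real.exp (-t ^ 2 / (2 * s))

/-!
Only the two latent variables `z i` and `z j` with distinct positive counts matter: every other
coordinate integrates to at most `1`. Integrating out `α` and `β` exactly leaves the contrast
`z i - z j ∼ N(0, τ σ²)` with `τ > 0` fixed by the design and the prior. On `I i × I j`, whose
factors are bounded and lie on either side of a point, its density integrates to at most `√(2πτσ²)`
and to at most `|I i| |I j| / √(2πτσ²)`. After multiplication by `σ⁻²`, the first bound is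
integrable in `σ²` near `0` and the second near `∞`.
-/

section UnivariateNormal

variable {s v : ℝ}

theorem nd_nonneg (hs : 0 ≤ s) (x : ℝ) : 0 ≤ nd s x := by
  unfold nd
  positivity

theorem nd_neg (s x : ℝ) : nd s (-x) = nd s x := by
  simp only [nd, neg_sq]

theorem continuous_nd (s : ℝ) : Continuous (nd s) := by
  unfold nd
  fun_prop

theorem measurable_nd (s : ℝ) : Measurable (nd s) := (continuous_nd s).measurable

theorem nd_eq_inv_sqrt_mul_exp (hs : 0 ≤ s) (x : ℝ) :
    nd s x = (√(2 * π * s))⁻¹ * exp (-x ^ 2 / (2 * s)) := by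
  rw [nd, neg_div, rpow_neg (by positivity), ← sqrt_eq_rpow]

theorem nd_le_inv_sqrt (hs : 0 ≤ s) (x : ℝ) : nd s x ≤ (√(2 * π * s))⁻¹ := by
  rw [nd_eq_inv_sqrt_mul_exp hs]
  refine mul_le_of_le_one_right (by positivity) (exp_le_one_iff.mpr ?_)
  rw [neg_div]
  exact neg_nonpos.mpr (by positivity)

theorem nd_sub_eq_gaussianPDFReal (hs : 0 ≤ s) (m x : ℝ) :
    nd s (x - m) = ProbabilityTheory.gaussianPDFReal m s.toNNReal x := by
  rw [nd_eq_inv_sqrt_mul_exp hs, ProbabilityTheory.gaussianPDFReal, coe_toNNReal s hs]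

theorem integrable_nd_sub (hs : 0 ≤ s) (m : ℝ) : Integrable fun x => nd s (x - m) := by
  simpa only [nd_sub_eq_gaussianPDFReal hs] using
    ProbabilityTheory.integrable_gaussianPDFReal m s.toNNReal

theorem lintegral_nd_sub (hs : 0 < s) (m : ℝ) : ∫⁻ x, ENNReal.ofReal (nd s (x - m)) = 1 := by
  simpa only [nd_sub_eq_gaussianPDFReal hs.le] using
    ProbabilityTheory.lintegral_gaussianPDFReal_eq_one m (toNNReal_pos.mpr hs).ne'

/-- Completing the square: if `x ∼ N(0, s)` and `y ∣ x ∼ N(b x, v)`, then `y ∼ N(0, v + b² s)`, and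
the second factor is the density of `x` given `y`. -/
theorem nd_mul_nd_sub_mul (hs : 0 < s) (hv : 0 < v) (b y x : ℝ) :
    nd s x * nd v (y - b * x) = nd (v + b ^ 2 * s) y *
      nd (v * s / (v + b ^ 2 * s)) (x - b * s * y / (v + b ^ 2 * s)) := by
  have hw : 0 < v + b ^ 2 * s := by positivity
  rw [nd_eq_inv_sqrt_mul_exp hs.le, nd_eq_inv_sqrt_mul_exp hv.le, nd_eq_inv_sqrt_mul_exp hw.le,
    nd_eq_inv_sqrt_mul_exp (by positivity), mul_mul_mul_comm, ← exp_add, ← mul_inv,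
    ← sqrt_mul (by positivity), mul_mul_mul_comm _ (exp (-y ^ 2 / _)), ← exp_add, ← mul_inv,
    ← sqrt_mul (by positivity)]
  congr 2
  · congr 1
    field_simp
  · field_simp
    ring

theorem lintegral_nd_mul_nd_sub_mul (hs : 0 < s) (hv : 0 < v) (b y : ℝ) :
    ∫⁻ x, ENNReal.ofReal (nd s x * nd v (y - b * x)) = ENNReal.ofReal (nd (v + b ^ 2 * s) y) := by
  have hw : 0 < v + b ^ 2 * s := by positivity
  simp only [nd_mul_nd_sub_mul hs hv, ENNReal.ofReal_mul (nd_nonneg hw.le y)]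
  rw [lintegral_const_mul' _ _ ENNReal.ofReal_ne_top, lintegral_nd_sub (by positivity), mul_one]

theorem lintegral_nd_sub_mul_nd_sub (hs : 0 < s) (hv : 0 < v) (x y : ℝ) :
    ∫⁻ a, ENNReal.ofReal (nd s (x - a) * nd v (y - a)) = ENNReal.ofReal (nd (v + s) (x - y)) := by
  have hshift : ∀ a, nd v (y - a) = nd v (x - y - 1 * (x - a)) := fun a => by
    rw [← nd_neg]
    ring_nf
  simp only [hshift]
  rw [lintegral_sub_left_eq_self
    (fun a => ENNReal.ofReal (nd s a * nd v (x - y - 1 * a))) x, lintegral_nd_mul_nd_sub_mul hs hv]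
  ring_nf

end UnivariateNormal

theorem lintegral_ofReal_fintype_prod {ι : Type*} [Fintype ι] {E : ι → Type*}
    [∀ i, MeasurableSpace (E i)] (μ : ∀ i, Measure (E i)) [∀ i, SigmaFinite (μ i)]
    {f : ∀ i, E i → ℝ} (hf : ∀ i, Integrable (f i) (μ i)) (hf₀ : ∀ i x, 0 ≤ f i x) :
    ∫⁻ x, ENNReal.ofReal (∏ i, f i (x i)) ∂(Measure.pi μ) =
      ∏ i, ∫⁻ x, ENNReal.ofReal (f i x) ∂(μ i) := by
  rw [← ofReal_integral_eq_lintegral_ofReal (Integrable.fintype_prod_dep hf)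
    (.of_forall fun x => Finset.prod_nonneg fun i _ => hf₀ i (x i)),
    integral_fintype_prod_eq_prod, ENNReal.ofReal_prod_of_nonneg fun i _ => integral_nonneg (hf₀ i)]
  exact Finset.prod_congr rfl fun i _ =>
    ofReal_integral_eq_lintegral_ofReal (hf i) (.of_forall (hf₀ i))

section MultivariateNormal

variable {k : ℕ} {v : ℝ}

theorem lintegral_prod_nd_mul_nd_sub_dotProduct {s : Fin k → ℝ} (hs : ∀ i, 0 < s i) (hv : 0 < v)
    (b : Fin k → ℝ) (y : ℝ) :
    ∫⁻ x : Fin k → ℝ, ENNReal.ofReal ((∏ i, nd (s i) (x i)) * nd v (y - b ⬝ᵥ x)) =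
      ENNReal.ofReal (nd (v + ∑ i, b i ^ 2 * s i) y) := by
  induction k generalizing v with
  | zero => simp [volume_pi]
  | succ k ih =>
    have hprod : ∀ x : Fin k → ℝ, 0 ≤ ∏ i, nd (s i.succ) (x i) := fun x =>
      Finset.prod_nonneg fun i _ => nd_nonneg (hs _).le _
    have hw : 0 < v + b 0 ^ 2 * s 0 := by have := hs 0; positivity
    have hfirst : ∀ x : Fin k → ℝ, ∫⁻ t, ENNReal.ofReal ((nd (s 0) t * ∏ i, nd (s i.succ) (x i)) *
        nd v (y - (b 0 * t + ∑ i, b i.succ * x i))) =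
        ENNReal.ofReal ((∏ i, nd (s i.succ) (x i)) *
          nd (v + b 0 ^ 2 * s 0) (y - (fun i => b i.succ) ⬝ᵥ x)) := fun x => by
      rw [ENNReal.ofReal_mul (hprod x), ← lintegral_nd_mul_nd_sub_mul (hs 0) hv,
        ← lintegral_const_mul' _ _ ENNReal.ofReal_ne_top]
      refine lintegral_congr fun t => ?_
      rw [← ENNReal.ofReal_mul (hprod x), dotProduct]
      ring_nf
    have hmeas : Measurable fun q : ℝ × (Fin k → ℝ) => ENNReal.ofReal
        ((nd (s 0) q.1 * ∏ i, nd (s i.succ) (q.2 i)) *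
          nd v (y - (b 0 * q.1 + ∑ i, b i.succ * q.2 i))) := by
      have := measurable_nd
      fun_prop
    rw [← (volume_preserving_piFinSuccAbove (fun _ => ℝ) 0).symm.lintegral_comp_emb
      (MeasurableEquiv.measurableEmbedding _)]
    simp only [MeasurableEquiv.piFinSuccAbove_symm_apply, Fin.insertNthEquiv_zero,
      Fin.consEquiv_apply, Fin.prod_univ_succ, dotProduct, Fin.sum_univ_succ, Fin.cons_zero,
      Fin.cons_succ]
    rw [Measure.volume_eq_prod, lintegral_prod_symm' _ hmeas]
    simp only [hfirst]
    rw [ih (fun i => hs i.succ) hw, add_assoc]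

theorem continuous_gaussPdf (m : Fin k → ℝ) (S : Matrix (Fin k) (Fin k) ℝ) :
    Continuous (gaussPdf m S) := by
  unfold gaussPdf
  fun_prop

theorem gaussPdf_nonneg (m : Fin k → ℝ) {S : Matrix (Fin k) (Fin k) ℝ} (hS : 0 ≤ S.det)
    (x : Fin k → ℝ) : 0 ≤ gaussPdf m S x := by
  unfold gaussPdf
  positivity

theorem abs_det_mul_gaussPdf_mul_transpose (m : Fin k → ℝ) {L : Matrix (Fin k) (Fin k) ℝ}
    (hL : L.det ≠ 0) (x : Fin k → ℝ) :
    |L.det| * gaussPdf m (L * Lᵀ) (m + L *ᵥ x) = ∏ i, nd 1 (x i) := by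
  have hquad : L *ᵥ x ⬝ᵥ (L * Lᵀ)⁻¹ *ᵥ L *ᵥ x = ∑ i, x i ^ 2 := by
    have hunit : IsUnit L.det := hL.isUnit
    have hunitT : IsUnit Lᵀ.det := by rwa [det_transpose]
    rw [Matrix.mul_inv_rev, ← mulVec_mulVec, mulVec_mulVec x, nonsing_inv_mul L hunit, one_mulVec,
      dotProduct_comm, dotProduct_mulVec, ← mulVec_transpose, mulVec_mulVec,
      mul_nonsing_inv Lᵀ hunitT, one_mulVec]
    simp only [dotProduct, sq]
  have hdet : (L * Lᵀ).det ^ (-(1 : ℝ) / 2) = |L.det|⁻¹ := by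
    rw [det_mul, det_transpose, neg_div, rpow_neg (mul_self_nonneg _), ← sqrt_eq_rpow,
      sqrt_mul_self_eq_abs]
  have hconst : (2 * π) ^ (-(k : ℝ) / 2) = ∏ _i : Fin k, (√(2 * π * 1))⁻¹ := by
    rw [Finset.prod_const, Finset.card_univ, Fintype.card_fin, mul_one, sqrt_eq_rpow,
      ← rpow_neg (by positivity), ← rpow_mul_natCast (by positivity)]
    ring_nf
  simp only [nd_eq_inv_sqrt_mul_exp zero_le_one]
  rw [gaussPdf, add_sub_cancel_left, hquad, hdet, hconst, Finset.prod_mul_distrib, ← exp_sum]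
  have hexp : -(1 / 2) * ∑ i, x i ^ 2 = ∑ i, -x i ^ 2 / (2 * 1) := by
    rw [Finset.mul_sum]
    exact Finset.sum_congr rfl fun i _ => by ring
  rw [hexp]
  field_simp [abs_ne_zero.mpr hL]

theorem exists_eq_mul_transpose_of_posDef {n : Type*} [Fintype n] [DecidableEq n]
    {S : Matrix n n ℝ} (hS : S.PosDef) : ∃ L : Matrix n n ℝ, L.det ≠ 0 ∧ S = L * Lᵀ := by
  open scoped MatrixOrder in
  obtain ⟨L, hL⟩ := CStarAlgebra.nonneg_iff_eq_mul_star_self.mp hS.posSemidef.nonneg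
  rw [star_eq_conjTranspose, conjTranspose_eq_transpose_of_trivial] at hL
  refine ⟨L, fun h => hS.det_pos.ne' ?_, hL⟩
  rw [hL, det_mul, h, zero_mul]

theorem lintegral_eq_ofReal_abs_det_mul_lintegral_add_mulVec {n : Type*} [Fintype n]
    [DecidableEq n] {L : Matrix n n ℝ} (hL : L.det ≠ 0) (m : n → ℝ) {f : (n → ℝ) → ENNReal}
    (hf : Measurable f) :
    ∫⁻ x, f x = ENNReal.ofReal |L.det| * ∫⁻ x, f (m + L *ᵥ x) := by
  have hmap := Real.map_matrix_volume_pi_eq_smul_volume_pi hL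
  have hcomp : ∫⁻ x, f (m + L *ᵥ x) = ENNReal.ofReal |L.det|⁻¹ * ∫⁻ x, f (m + x) := by
    rw [← abs_inv, ← smul_eq_mul, ← lintegral_smul_measure, ← hmap, lintegral_map (by fun_prop)
      (toLin' L).continuous_of_finiteDimensional.measurable]
    simp only [toLin'_apply]
  rw [hcomp, ← mul_assoc, ← ENNReal.ofReal_mul (abs_nonneg _),
    mul_inv_cancel₀ (abs_ne_zero.mpr hL), ENNReal.ofReal_one, one_mul, lintegral_add_left_eq_self]

theorem lintegral_gaussPdf_mul_nd_sub_dotProduct {S : Matrix (Fin k) (Fin k) ℝ} (hS : S.PosDef)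
    (hv : 0 < v) (m c : Fin k → ℝ) (y : ℝ) :
    ∫⁻ x, ENNReal.ofReal (gaussPdf m S x * nd v (y - c ⬝ᵥ x)) =
      ENNReal.ofReal (nd (v + c ⬝ᵥ S *ᵥ c) (y - c ⬝ᵥ m)) := by
  obtain ⟨L, hL, rfl⟩ := exists_eq_mul_transpose_of_posDef hS
  have hmeas : Measurable fun x => ENNReal.ofReal (gaussPdf m (L * Lᵀ) x * nd v (y - c ⬝ᵥ x)) := by
    have := continuous_nd v
    have := continuous_gaussPdf m (L * Lᵀ)
    exact (Continuous.measurable (by fun_prop)).ennreal_ofReal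
  have hvar : c ⬝ᵥ (L * Lᵀ) *ᵥ c = ∑ i, (Lᵀ *ᵥ c) i ^ 2 * 1 := by
    rw [← mulVec_mulVec, dotProduct_mulVec, ← mulVec_transpose]
    simp only [dotProduct, sq, mul_one]
  rw [lintegral_eq_ofReal_abs_det_mul_lintegral_add_mulVec hL m hmeas, hvar,
    ← lintegral_prod_nd_mul_nd_sub_dotProduct (fun _ => one_pos) hv,
    ← lintegral_const_mul' _ _ ENNReal.ofReal_ne_top]
  refine lintegral_congr fun x => ?_
  rw [← ENNReal.ofReal_mul (abs_nonneg _), ← mul_assoc, abs_det_mul_gaussPdf_mul_transpose m hL,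
    dotProduct_add, dotProduct_mulVec, ← mulVec_transpose, sub_sub]

end MultivariateNormal

section SeparatedSets

variable {A B : Set ℝ} {v : ℝ}

theorem setLIntegral_prod_nd_sub_le_mul_volume (hv : 0 ≤ v) (A B : Set ℝ) :
    ∫⁻ w in A ×ˢ B, ENNReal.ofReal (nd v (w.1 - w.2)) ≤
      ENNReal.ofReal (√(2 * π * v))⁻¹ * (volume A * volume B) := by
  calc ∫⁻ w in A ×ˢ B, ENNReal.ofReal (nd v (w.1 - w.2))
      ≤ ∫⁻ _ in A ×ˢ B, ENNReal.ofReal (√(2 * π * v))⁻¹ :=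
        lintegral_mono fun _ => ENNReal.ofReal_le_ofReal (nd_le_inv_sqrt hv _)
    _ = ENNReal.ofReal (√(2 * π * v))⁻¹ * (volume A * volume B) := by
        rw [setLIntegral_const, Measure.volume_eq_prod, Measure.prod_prod]

theorem nd_sub_le_sqrt_mul_nd_mul_nd (hv : 0 < v) {x y t : ℝ} (hx : x ≤ t) (hy : t ≤ y) :
    nd v (x - y) ≤ √(2 * π * v) * (nd v (x - t) * nd v (y - t)) := by
  have hsq : (x - t) ^ 2 + (y - t) ^ 2 ≤ (x - y) ^ 2 := by
    nlinarith [mul_nonneg (sub_nonneg.mpr hx) (sub_nonneg.mpr hy)]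
  have hexp : exp (-(x - y) ^ 2 / (2 * v)) ≤
      exp (-(x - t) ^ 2 / (2 * v)) * exp (-(y - t) ^ 2 / (2 * v)) := by
    rw [← exp_add, ← add_div]
    gcongr
    linarith
  simp only [nd_eq_inv_sqrt_mul_exp hv.le]
  calc (√(2 * π * v))⁻¹ * exp (-(x - y) ^ 2 / (2 * v))
      ≤ (√(2 * π * v))⁻¹ * (exp (-(x - t) ^ 2 / (2 * v)) * exp (-(y - t) ^ 2 / (2 * v))) := by
        gcongr
    _ = √(2 * π * v) * ((√(2 * π * v))⁻¹ * exp (-(x - t) ^ 2 / (2 * v)) *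
          ((√(2 * π * v))⁻¹ * exp (-(y - t) ^ 2 / (2 * v)))) := by field_simp

theorem setLIntegral_prod_nd_sub_le_sqrt (hv : 0 < v) {t : ℝ} (hA : A ⊆ Set.Iic t)
    (hB : B ⊆ Set.Ici t) :
    ∫⁻ w in A ×ˢ B, ENNReal.ofReal (nd v (w.1 - w.2)) ≤ ENNReal.ofReal √(2 * π * v) := by
  have hmeas : AEMeasurable fun x => ENNReal.ofReal (nd v (x - t)) :=
    ((measurable_nd v).comp (measurable_sub_const t)).ennreal_ofReal.aemeasurable
  calc ∫⁻ w in A ×ˢ B, ENNReal.ofReal (nd v (w.1 - w.2))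
      ≤ ∫⁻ w in Set.Iic t ×ˢ Set.Ici t, ENNReal.ofReal (nd v (w.1 - w.2)) :=
        lintegral_mono_set (Set.prod_mono hA hB)
    _ ≤ ∫⁻ w in Set.Iic t ×ˢ Set.Ici t, ENNReal.ofReal √(2 * π * v) *
          (ENNReal.ofReal (nd v (w.1 - t)) * ENNReal.ofReal (nd v (w.2 - t))) := by
        refine setLIntegral_mono' (measurableSet_Iic.prod measurableSet_Ici) fun w hw => ?_
        rw [← ENNReal.ofReal_mul (nd_nonneg hv.le _), ← ENNReal.ofReal_mul (sqrt_nonneg _)]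
        exact ENNReal.ofReal_le_ofReal (nd_sub_le_sqrt_mul_nd_mul_nd hv hw.1 hw.2)
    _ ≤ ∫⁻ w : ℝ × ℝ, ENNReal.ofReal √(2 * π * v) *
          (ENNReal.ofReal (nd v (w.1 - t)) * ENNReal.ofReal (nd v (w.2 - t))) :=
        setLIntegral_le_lintegral _ _
    _ = ENNReal.ofReal √(2 * π * v) := by
        rw [lintegral_const_mul' _ _ ENNReal.ofReal_ne_top, Measure.volume_eq_prod,
          lintegral_prod_mul hmeas hmeas, lintegral_nd_sub hv, mul_one, mul_one]

end SeparatedSets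

theorem setLIntegral_Ioi_lt_top_of_le_rpow {F : ℝ → ENNReal} {C₀ C₁ : ENNReal} {a b : ℝ}
    (hC₀ : C₀ ≠ ⊤) (hC₁ : C₁ ≠ ⊤) (ha : -1 < a) (hb : b < -1)
    (h₀ : ∀ s ∈ Set.Ioc 0 1, F s ≤ C₀ * ENNReal.ofReal (s ^ a))
    (h₁ : ∀ s ∈ Set.Ioi 1, F s ≤ C₁ * ENNReal.ofReal (s ^ b)) :
    ∫⁻ s in Set.Ioi (0 : ℝ), F s < ⊤ := by
  have hint₀ : IntegrableOn (fun s : ℝ => s ^ a) (Set.Ioc 0 1) :=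
    (intervalIntegrable_iff_integrableOn_Ioc_of_le zero_le_one).mp
      (intervalIntegral.intervalIntegrable_rpow' ha)
  have hint₁ : IntegrableOn (fun s : ℝ => s ^ b) (Set.Ioi 1) :=
    integrableOn_Ioi_rpow_of_lt hb one_pos
  rw [← Set.Ioc_union_Ioi_eq_Ioi (zero_le_one' ℝ)]
  refine (lintegral_union_le _ _ _).trans_lt (ENNReal.add_lt_top.mpr ⟨?_, ?_⟩)
  · refine (setLIntegral_mono' measurableSet_Ioc h₀).trans_lt ?_
    rw [lintegral_const_mul' _ _ hC₀]
    exact ENNReal.mul_lt_top hC₀.lt_top hint₀.lintegral_lt_top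
  · refine (setLIntegral_mono' measurableSet_Ioi h₁).trans_lt ?_
    rw [lintegral_const_mul' _ _ hC₁]
    exact ENNReal.mul_lt_top hC₁.lt_top hint₁.lintegral_lt_top

theorem setLIntegral_Ioi_inv_mul_prod_nd_sub_lt_top {A B : Set ℝ} {t τ : ℝ} (hτ : 0 < τ)
    (hA : A ⊆ Set.Iic t) (hB : B ⊆ Set.Ici t) (hA_fin : volume A ≠ ⊤) (hB_fin : volume B ≠ ⊤) :
    ∫⁻ s in Set.Ioi (0 : ℝ), ENNReal.ofReal s⁻¹ *
      ∫⁻ w in A ×ˢ B, ENNReal.ofReal (nd (τ * s) (w.1 - w.2)) < ⊤ := by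
  have hsqrt : ∀ s : ℝ, √(2 * π * (τ * s)) = √(2 * π * τ) * √s := fun s => by
    rw [← mul_assoc, sqrt_mul (by positivity)]
  refine setLIntegral_Ioi_lt_top_of_le_rpow (C₀ := ENNReal.ofReal √(2 * π * τ))
    (C₁ := ENNReal.ofReal (√(2 * π * τ))⁻¹ * (volume A * volume B))
    (a := -1 / 2) (b := -3 / 2) ENNReal.ofReal_ne_top (by finiteness) (by norm_num) (by norm_num)
    (fun s hs => ?_) (fun s hs => ?_)
  · obtain ⟨hs, -⟩ := hs
    have hpow : s⁻¹ * √s = s ^ (-1 / 2 : ℝ) := by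
      rw [sqrt_eq_rpow, ← rpow_neg_one, ← rpow_add hs]
      norm_num
    grw [setLIntegral_prod_nd_sub_le_sqrt (by positivity) hA hB]
    rw [← ENNReal.ofReal_mul (by positivity), ← ENNReal.ofReal_mul (by positivity), hsqrt, ← hpow,
      mul_left_comm]
  · replace hs : 0 < s := one_pos.trans hs
    have hpow : s⁻¹ * (√s)⁻¹ = s ^ (-3 / 2 : ℝ) := by
      rw [sqrt_eq_rpow, ← rpow_neg_one, ← rpow_neg hs.le, ← rpow_add hs]
      norm_num
    grw [setLIntegral_prod_nd_sub_le_mul_volume (by positivity) A B]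
    rw [hsqrt, mul_inv, ENNReal.ofReal_mul (by positivity), ← hpow,
      ENNReal.ofReal_mul (by positivity)]
    exact le_of_eq (by ring)

section MarginalLikelihood

variable {ι : Type*} [Fintype ι] {s : ℝ}

theorem setLIntegral_univ_pi_prod_nd_sub_le (hs : 0 < s) (I : ι → Set ℝ) (m : ι → ℝ) {i j : ι}
    (hij : i ≠ j) :
    ∫⁻ z in Set.univ.pi I, ENNReal.ofReal (∏ k, nd s (z k - m k)) ≤
      ∫⁻ w in I i ×ˢ I j, ENNReal.ofReal (nd s (w.1 - m i) * nd s (w.2 - m j)) := by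
  classical
  have hle_one : ∀ k, ∫⁻ x in I k, ENNReal.ofReal (nd s (x - m k)) ≤ 1 := fun k =>
    (setLIntegral_le_lintegral _ _).trans_eq (lintegral_nd_sub hs (m k))
  have hmeas : ∀ k, Measurable fun x => ENNReal.ofReal (nd s (x - m k)) := fun k =>
    ((measurable_nd s).comp (measurable_sub_const _)).ennreal_ofReal
  calc ∫⁻ z in Set.univ.pi I, ENNReal.ofReal (∏ k, nd s (z k - m k))
      = ∏ k, ∫⁻ x in I k, ENNReal.ofReal (nd s (x - m k)) := by
        rw [volume_pi, Measure.restrict_pi_pi]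
        exact lintegral_ofReal_fintype_prod _ (fun k => (integrable_nd_sub hs.le (m k)).restrict)
          fun k _ => nd_nonneg hs.le _
    _ ≤ ∏ k ∈ {i, j}, ∫⁻ x in I k, ENNReal.ofReal (nd s (x - m k)) :=
        Finset.prod_le_prod_of_subset_of_le_one' (Finset.subset_univ _) fun k _ _ => hle_one k
    _ = ∫⁻ w in I i ×ˢ I j, ENNReal.ofReal (nd s (w.1 - m i) * nd s (w.2 - m j)) := by
        simp only [ENNReal.ofReal_mul (nd_nonneg hs.le _)]
        rw [Finset.prod_pair hij, Measure.volume_eq_prod, ← Measure.prod_restrict,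
          lintegral_prod_mul (hmeas i).aemeasurable (hmeas j).aemeasurable]

theorem lintegral_setLIntegral_univ_pi_prod_nd_le (hs : 0 < s) (I : ι → Set ℝ) (m : ι → ℝ)
    {i j : ι} (hij : i ≠ j) :
    ∫⁻ α : ℝ, ∫⁻ z in Set.univ.pi I, ENNReal.ofReal (∏ k, nd s (z k - α - m k)) ≤
      ∫⁻ w in I i ×ˢ I j, ENNReal.ofReal (nd (2 * s) (w.1 - w.2 - (m i - m j))) := by
  have hmeas : Measurable fun q : ℝ × (ℝ × ℝ) =>
      ENNReal.ofReal (nd s (q.2.1 - m i - q.1) * nd s (q.2.2 - m j - q.1)) := by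
    have := measurable_nd s
    fun_prop
  calc ∫⁻ α : ℝ, ∫⁻ z in Set.univ.pi I, ENNReal.ofReal (∏ k, nd s (z k - α - m k))
      ≤ ∫⁻ α : ℝ, ∫⁻ w in I i ×ˢ I j,
          ENNReal.ofReal (nd s (w.1 - m i - α) * nd s (w.2 - m j - α)) := by
        refine lintegral_mono fun α => ?_
        simpa only [sub_sub, add_comm α] using
          setLIntegral_univ_pi_prod_nd_sub_le hs I (fun k => m k + α) hij
    _ = ∫⁻ w in I i ×ˢ I j, ∫⁻ α : ℝ,
          ENNReal.ofReal (nd s (w.1 - m i - α) * nd s (w.2 - m j - α)) :=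
        lintegral_lintegral_swap hmeas.aemeasurable
    _ = ∫⁻ w in I i ×ˢ I j, ENNReal.ofReal (nd (2 * s) (w.1 - w.2 - (m i - m j))) := by
        simp only [lintegral_nd_sub_mul_nd_sub hs hs, two_mul, sub_sub_sub_comm]

theorem lintegral_gaussPdf_mul_setLIntegral_prod_nd_sub_dotProduct {k : ℕ} {v : ℝ}
    {S : Matrix (Fin k) (Fin k) ℝ} (hS : S.PosDef) (hv : 0 < v) (m c : Fin k → ℝ) (A B : Set ℝ) :
    ∫⁻ β, ENNReal.ofReal (gaussPdf m S β) *
        ∫⁻ w in A ×ˢ B, ENNReal.ofReal (nd v (w.1 - w.2 - c ⬝ᵥ β)) =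
      ∫⁻ w in A ×ˢ B, ENNReal.ofReal (nd (v + c ⬝ᵥ S *ᵥ c) (w.1 - w.2 - c ⬝ᵥ m)) := by
  have hmeas : Measurable fun q : (Fin k → ℝ) × (ℝ × ℝ) =>
      ENNReal.ofReal (gaussPdf m S q.1 * nd v (q.2.1 - q.2.2 - c ⬝ᵥ q.1)) := by
    have := continuous_nd v
    have := continuous_gaussPdf m S
    exact (Continuous.measurable (by fun_prop)).ennreal_ofReal
  simp only [← lintegral_const_mul' _ _ ENNReal.ofReal_ne_top,
    ← ENNReal.ofReal_mul (gaussPdf_nonneg m hS.det_pos.le _)]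
  rw [lintegral_lintegral_swap hmeas.aemeasurable]
  simp only [lintegral_gaussPdf_mul_nd_sub_dotProduct hS hv]

theorem lintegral_star_le {p : ℕ} (hs : 0 < s) (I : ι → Set ℝ) (X : Matrix ι (Fin p) ℝ)
    {S : Matrix (Fin p) (Fin p) ℝ} (hS : S.PosDef) {i j : ι} (hij : i ≠ j) :
    ∫⁻ β : Fin p → ℝ, ∫⁻ α : ℝ, ∫⁻ z in Set.univ.pi I, ENNReal.ofReal
        ((∏ k, nd s (z k - α - (X *ᵥ β) k)) * gaussPdf 0 (s • S) β * s⁻¹) ≤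
      ENNReal.ofReal s⁻¹ * ∫⁻ w in I i ×ˢ I j,
        ENNReal.ofReal (nd ((2 + (X i - X j) ⬝ᵥ S *ᵥ (X i - X j)) * s) (w.1 - w.2)) := by
  have hsS : (s • S).PosDef := hS.smul hs
  have hprior : ∀ β, 0 ≤ gaussPdf 0 (s • S) β := gaussPdf_nonneg 0 hsS.det_pos.le
  have hcontrast : ∀ β, (X *ᵥ β) i - (X *ᵥ β) j = (X i - X j) ⬝ᵥ β := fun β =>
    (sub_dotProduct _ _ _).symm
  have hvar : 2 * s + (X i - X j) ⬝ᵥ (s • S) *ᵥ (X i - X j) =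
      (2 + (X i - X j) ⬝ᵥ S *ᵥ (X i - X j)) * s := by
    rw [smul_mulVec, dotProduct_smul, smul_eq_mul]
    ring
  calc ∫⁻ β : Fin p → ℝ, ∫⁻ α : ℝ, ∫⁻ z in Set.univ.pi I, ENNReal.ofReal
        ((∏ k, nd s (z k - α - (X *ᵥ β) k)) * gaussPdf 0 (s • S) β * s⁻¹)
      = ENNReal.ofReal s⁻¹ * ∫⁻ β : Fin p → ℝ, ENNReal.ofReal (gaussPdf 0 (s • S) β) *
          ∫⁻ α : ℝ, ∫⁻ z in Set.univ.pi I,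
            ENNReal.ofReal (∏ k, nd s (z k - α - (X *ᵥ β) k)) := by
        simp only [← lintegral_const_mul' _ _ ENNReal.ofReal_ne_top,
          ← ENNReal.ofReal_mul (hprior _), ← ENNReal.ofReal_mul (inv_nonneg.mpr hs.le), mul_comm]
    _ ≤ ENNReal.ofReal s⁻¹ * ∫⁻ β : Fin p → ℝ, ENNReal.ofReal (gaussPdf 0 (s • S) β) *
          ∫⁻ w in I i ×ˢ I j,
            ENNReal.ofReal (nd (2 * s) (w.1 - w.2 - (X i - X j) ⬝ᵥ β)) := by
        gcongr with β
        rw [← hcontrast]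
        exact lintegral_setLIntegral_univ_pi_prod_nd_le hs I (X *ᵥ β) hij
    _ = ENNReal.ofReal s⁻¹ * ∫⁻ w in I i ×ˢ I j,
          ENNReal.ofReal (nd ((2 + (X i - X j) ⬝ᵥ S *ᵥ (X i - X j)) * s) (w.1 - w.2)) := by
        rw [lintegral_gaussPdf_mul_setLIntegral_prod_nd_sub_dotProduct hsS (by positivity), hvar]
        simp only [dotProduct_zero, sub_zero]

end MarginalLikelihood

theorem star_posterior_exists_general {ι : Type*} [Fintype ι] {p : ℕ} (I : ι → Set ℝ)
    (X : Matrix ι (Fin p) ℝ) {S : Matrix (Fin p) (Fin p) ℝ} (hS : S.PosDef)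
    {i j : ι} (hij : i ≠ j) {t : ℝ} (hi : I i ⊆ Set.Iic t) (hj : I j ⊆ Set.Ici t)
    (hi_fin : volume (I i) ≠ ⊤) (hj_fin : volume (I j) ≠ ⊤) :
    ∫⁻ s in Set.Ioi (0 : ℝ), ∫⁻ β : Fin p → ℝ, ∫⁻ α : ℝ, ∫⁻ z in Set.univ.pi I, ENNReal.ofReal
      ((∏ k, nd s (z k - α - (X *ᵥ β) k)) * gaussPdf 0 (s • S) β * s⁻¹) < ⊤ := by
  have hvar : 0 ≤ (X i - X j) ⬝ᵥ S *ᵥ (X i - X j) := hS.posSemidef.dotProduct_mulVec_nonneg _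
  exact (setLIntegral_mono' measurableSet_Ioi fun s hs => lintegral_star_le hs I X hS hij).trans_lt
    (setLIntegral_Ioi_inv_mul_prod_nd_sub_lt_top (by positivity) hi hj hi_fin hj_fin)

section CountInterval

/-- The set of latent values `z` that are rounded to the count `k`, that is `⌊exp z⌋ = k`. -/
noncomputable def countInterval (k : ℕ) : Set ℝ :=
  if k = 0 then Set.Iio (0 : ℝ) else Set.Ico (Real.log k) (Real.log (k + 1))

theorem countInterval_of_pos {k : ℕ} (hk : 0 < k) :
    countInterval k = Set.Ico (Real.log k) (Real.log (k + 1)) :=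
  if_neg hk.ne'

theorem countInterval_subset_Iic {k l : ℕ} (hkl : k < l) : countInterval k ⊆ Set.Iic (log l) := by
  unfold countInterval
  split_ifs with hk
  · exact fun x hx => hx.le.trans (log_natCast_nonneg l)
  · have hle : (k : ℝ) + 1 ≤ l := mod_cast hkl
    exact fun x hx => hx.2.le.trans (log_le_log (by positivity) hle)

theorem countInterval_subset_Ici {k : ℕ} (hk : 0 < k) : countInterval k ⊆ Set.Ici (log k) := by
  rw [countInterval_of_pos hk]
  exact Set.Ico_subset_Icc_self.trans Set.Icc_subset_Ici_self

theorem volume_countInterval_ne_top {k : ℕ} (hk : 0 < k) : volume (countInterval k) ≠ ⊤ := by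
  rw [countInterval_of_pos hk]
  exact measure_Ico_lt_top.ne

end CountInterval

section GPrior

variable {m n K : Type*} [Field K]

theorem mulVec_injective_of_rank_eq_card [Fintype n] {M : Matrix m n K}
    (hM : M.rank = Fintype.card n) : Function.Injective M.mulVec := by
  rw [mulVec_injective_iff, linearIndependent_iff_card_eq_finrank_span, ← hM,
    rank_eq_finrank_span_cols]
  rfl

theorem mulVec_injective_of_rank_cons_eq_succ {p : ℕ} {c : m → K} {X : Matrix m (Fin p) K}
    (hX : (of fun i => Fin.cons (c i) (X i) : Matrix m (Fin (p + 1)) K).rank = p + 1) :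
    Function.Injective X.mulVec := by
  have hcols := mulVec_injective_iff.mp
    (mulVec_injective_of_rank_eq_card (hX.trans (Fintype.card_fin _).symm))
  exact mulVec_injective_iff.mpr (hcols.comp Fin.succ (Fin.succ_injective p))

theorem posDef_smul_inv_transpose_mul_self [Fintype m] [Fintype n] [DecidableEq n]
    {X : Matrix m n ℝ} (hX : Function.Injective X.mulVec) {g : ℝ} (hg : 0 < g) :
    (g • (Xᵀ * X)⁻¹).PosDef := by
  rw [← conjTranspose_eq_transpose_of_trivial]
  exact (PosDef.conjTranspose_mul_self X hX).inv.smul hg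

end GPrior

/-- Posterior existence for the STAR count regression model under the improper
prior `p(α, σ²) ∝ σ⁻²` and the g-prior on `β`: if the data contain two distinct
positive counts, the marginal likelihood is finite. -/
theorem star_posterior_exists (n p : ℕ) (y : Fin n → ℕ)
    (I : Fin n → Set ℝ)
    (hI : ∀ i, I i = if y i = 0 then Set.Iio (0 : ℝ)
      else Set.Ico (Real.log (y i)) (Real.log (y i + 1)))
    (X : Matrix (Fin n) (Fin p) ℝ)
    (hcent : Xᵀ *ᵥ (fun _ => (1 : ℝ)) = 0)
    (hrank : (Matrix.of fun i => Fin.cons (1 : ℝ) (fun j => X i j)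
        : Matrix (Fin n) (Fin (p + 1)) ℝ).rank = p + 1)
    (g : ℝ) (hg : 0 < g)
    (hcounts : ∃ i j : Fin n, i ≠ j ∧ 0 < y i ∧ y i < y j) :
    (∫⁻ s in Set.Ioi (0 : ℝ), ∫⁻ β : Fin p → ℝ, ∫⁻ α : ℝ,
        ∫⁻ z in (Set.univ.pi I),
          ENNReal.ofReal
            ((∏ i, nd s (z i - α - (X *ᵥ β) i)) *
              gaussPdf (0 : Fin p → ℝ) ((g * s) • (Xᵀ * X)⁻¹) β * s⁻¹)) < ⊤ := by
  obtain rfl : I = fun i => countInterval (y i) := funext hI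
  obtain ⟨i, j, hij, hi, hlt⟩ := hcounts
  have hprior := posDef_smul_inv_transpose_mul_self (mulVec_injective_of_rank_cons_eq_succ hrank) hg
  simpa only [smul_smul, mul_comm g] using star_posterior_exists_general _ X hprior hij
    (countInterval_subset_Iic hlt) (countInterval_subset_Ici (hi.trans hlt))
    (volume_countInterval_ne_top hi) (volume_countInterval_ne_top (hi.trans hlt))
end
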